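/- Let k ≥ 2 be a natural number, let h : ℕ → ℚ be a k-automatic sequence taking nonnegative rational values, and let s(n) = ∑_{j<n} h(j). Then there exist a real number β with 0 < β < k, a real constant C > 0, an integer a ≥ 1, and rational numbers c_0, c_1, …, c_{a−1} such that for every n ≥ 0 and every j ∈ {0, 1, …, a−1}, |s(k^{an+j}) − c_j · k^{an+j}| < C · β^{an}. -/

import Mathlib

open Filter

/-- A sequence `h : ℕ → Δ` is `k`-automatic if there is a DFAO (finite state set `Q`,
initial state `q₀`, transition function `δ`, output function `τ`) computing `h n` by
reading the base-`k` digits of `n` from the most significant digit to the least. -/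
def IsAutomaticSeq {Δ : Type*} (k : ℕ) (h : ℕ → Δ) : Prop :=
  ∃ (Q : Type) (_ : Fintype Q) (q₀ : Q) (δ : Q → ℕ → Q) (τ : Q → Δ),
    ∀ n : ℕ, h n = τ (((Nat.digits k n).reverse).foldl δ q₀)

/-- The averaging operator of an automaton. -/
noncomputable def avgOp (F : Type) [Field F] {S : Type} (k : ℕ) (δ : S → ℕ → S) :
    (S → F) →ₗ[F] (S → F) where
  toFun f q := (k : F)⁻¹ * ∑ d ∈ Finset.range k, f (δ q d)
  map_add' f g := by
    funext q
    simp [Finset.sum_add_distrib, mul_add]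
  map_smul' c f := by
    funext q
    simp [← Finset.mul_sum, mul_left_comm]

lemma avgOp_apply (F : Type) [Field F] {S : Type} (k : ℕ) (δ : S → ℕ → S) (f : S → F) (q : S) :
    avgOp F k δ f q = (k : F)⁻¹ * ∑ d ∈ Finset.range k, f (δ q d) := rfl

/-- Coordinatewise cast. -/
def castFun {S : Type} (f : S → ℚ) : S → ℂ := fun q => (f q : ℂ)

lemma castFun_avg {S : Type} (k : ℕ) (δ : S → ℕ → S) (f : S → ℚ) :
    castFun (avgOp ℚ k δ f) = avgOp ℂ k δ (castFun f) := by
  funext q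
  simp [castFun, avgOp_apply]

lemma castFun_avg_pow {S : Type} (k : ℕ) (δ : S → ℕ → S) (n : ℕ) (f : S → ℚ) :
    castFun ((avgOp ℚ k δ ^ n) f) = (avgOp ℂ k δ ^ n) (castFun f) := by
  induction n generalizing f with
  | zero => simp
  | succ n ih => rw [pow_succ, pow_succ, Module.End.mul_apply, Module.End.mul_apply, ih, castFun_avg]

lemma castFun_sub {S : Type} (f g : S → ℚ) : castFun (f - g) = castFun f - castFun g := by
  funext q; simp [castFun]

lemma castFun_eq_zero {S : Type} (f : S → ℚ) (h : castFun f = 0) : f = 0 := by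
  funext q
  have := congrFun h q
  simpa [castFun] using this

lemma sum_run {S : Type} (k : ℕ) (hk : 2 ≤ k) (δ : S → ℕ → S) (run : ℕ → S)
    (hrun : ∀ n, ∀ d < k, run (k * n + d) = δ (run n) d) (m : ℕ) (f : S → ℚ) :
    ∑ n ∈ Finset.range (k ^ m), f (run n) = (k : ℚ) ^ m * (avgOp ℚ k δ ^ m) f (run 0) := by
  have hk0 : (k : ℚ) ≠ 0 := by
    have : k ≠ 0 := by omega
    exact_mod_cast this
  have key : ∀ (N : ℕ) (f : S → ℚ), ∑ n ∈ Finset.range (k * N), f (run n)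
      = (k : ℚ) * ∑ n ∈ Finset.range N, avgOp ℚ k δ f (run n) := by
    intro N f
    induction N with
    | zero => simp
    | succ N ih =>
      rw [Nat.mul_succ, Finset.sum_range_add, ih, Finset.sum_range_succ, mul_add, avgOp_apply,
        mul_inv_cancel_left₀ hk0]
      congr 1
      apply Finset.sum_congr rfl
      intro d hd
      rw [hrun N d (Finset.mem_range.mp hd)]
  induction m generalizing f with
  | zero => simp
  | succ m ih =>
    rw [pow_succ', key, ih, pow_succ' (k : ℚ), pow_succ (avgOp ℚ k δ), Module.End.mul_apply, mul_assoc]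

section
variable {S : Type} [Fintype S]

lemma norm_avg_le (k : ℕ) (hk : 2 ≤ k) (δ : S → ℕ → S) (f : S → ℂ) :
    ‖avgOp ℂ k δ f‖ ≤ ‖f‖ := by
  have hk0 : (0 : ℝ) < k := by
    have : 0 < k := by omega
    exact_mod_cast this
  rw [pi_norm_le_iff_of_nonneg (norm_nonneg _)]
  intro q
  rw [avgOp_apply, norm_mul, norm_inv, Complex.norm_natCast, inv_mul_le_iff₀ hk0]
  calc ‖∑ d ∈ Finset.range k, f (δ q d)‖ ≤ ∑ d ∈ Finset.range k, ‖f (δ q d)‖ := norm_sum_le _ _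
    _ ≤ ∑ d ∈ Finset.range k, ‖f‖ := Finset.sum_le_sum fun d _ => norm_le_pi_norm f _
    _ = k * ‖f‖ := by simp

lemma norm_avg_pow_le (k : ℕ) (hk : 2 ≤ k) (δ : S → ℕ → S) (n : ℕ) (f : S → ℂ) :
    ‖(avgOp ℂ k δ ^ n) f‖ ≤ ‖f‖ := by
  induction n generalizing f with
  | zero => simp
  | succ n ih =>
    rw [pow_succ, Module.End.mul_apply]
    exact (ih _).trans (norm_avg_le k hk δ f)

lemma disjoint_ker_range (k : ℕ) (hk : 2 ≤ k) (δ : S → ℕ → S) (a : ℕ) (v w : S → ℂ)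
    (h1 : (avgOp ℂ k δ ^ a) v - v = w) (h2 : (avgOp ℂ k δ ^ a) w = w) : w = 0 := by
  have h : ∀ n : ℕ, (avgOp ℂ k δ ^ (a * n)) v = v + (n : ℂ) • w := by
    intro n
    induction n with
    | zero => simp
    | succ n ih =>
      have h3 : (avgOp ℂ k δ ^ a) v = v + w := by rw [← h1]; abel
      rw [Nat.mul_succ, add_comm, pow_add, Module.End.mul_apply, ih, map_add, map_smul, h2, h3]
      push_cast
      module
  by_contra hw
  have hw' : 0 < ‖w‖ := norm_pos_iff.mpr hw
  obtain ⟨n, hn⟩ := exists_nat_gt (2 * ‖v‖ / ‖w‖)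
  rw [div_lt_iff₀ hw'] at hn
  have h3 := norm_avg_pow_le k hk δ (a * n) v
  have h4 : (n : ℂ) • w = (avgOp ℂ k δ ^ (a * n)) v - v := by rw [h n]; abel
  have h5 : ‖(n : ℂ) • w‖ ≤ ‖(avgOp ℂ k δ ^ (a * n)) v‖ + ‖v‖ := by
    rw [h4]; exact norm_sub_le _ _
  rw [norm_smul, Complex.norm_natCast] at h5
  linarith

/-- equality case of the triangle inequality -/
lemma eq_of_avg (k : ℕ) (hk : 2 ≤ k) (z : ℕ → ℂ) (c : ℂ) (hz : ∀ d < k, ‖z d‖ ≤ ‖c‖)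
    (hs : ∑ d ∈ Finset.range k, z d = k * c) : ∀ d < k, z d = c := by
  have hre : ∀ d < k, (z d * (starRingEnd ℂ) c).re ≤ ‖c‖ ^ 2 := by
    intro d hd
    calc (z d * (starRingEnd ℂ) c).re ≤ ‖z d * (starRingEnd ℂ) c‖ := Complex.re_le_norm _
      _ = ‖z d‖ * ‖c‖ := by simp
      _ ≤ ‖c‖ * ‖c‖ := by gcongr; exact hz d hd
      _ = ‖c‖ ^ 2 := by ring
  have hsum : ∑ d ∈ Finset.range k, (z d * (starRingEnd ℂ) c).re
      = ∑ d ∈ Finset.range k, ‖c‖ ^ 2 := by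
    rw [← Complex.re_sum, ← Finset.sum_mul, hs, mul_assoc, Complex.mul_conj, Complex.normSq_eq_norm_sq]
    simp [← Complex.ofReal_pow, ← Complex.ofReal_natCast, ← Complex.ofReal_mul, -Complex.ofReal_mul]
  have heq := (Finset.sum_eq_sum_iff_of_le
    (fun d hd => hre d (Finset.mem_range.mp hd))).mp hsum
  intro d hd
  have h1 := heq d (Finset.mem_range.mpr hd)
  have h2 := hz d hd
  have h3 : ‖z d - c‖ ^ 2 ≤ 0 := by
    have : ‖z d - c‖ ^ 2 = ‖z d‖ ^ 2 + ‖c‖ ^ 2 - 2 * (z d * (starRingEnd ℂ) c).re := by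
      rw [← Complex.normSq_eq_norm_sq, Complex.normSq_sub, Complex.normSq_eq_norm_sq,
        Complex.normSq_eq_norm_sq]
    rw [this, h1]
    nlinarith [norm_nonneg (z d)]
  have h4 : ‖z d - c‖ = 0 := by nlinarith [norm_nonneg (z d - c)]
  exact sub_eq_zero.mp (norm_eq_zero.mp h4)

lemma eigen_root (k : ℕ) (hk : 2 ≤ k) (δ : S → ℕ → S) (v : S → ℂ) (hv : v ≠ 0) (l : ℂ)
    (hl : ‖l‖ = 1) (hvl : avgOp ℂ k δ v = l • v) : l ^ (Fintype.card S).factorial = 1 := by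
  have hk0 : (k : ℂ) ≠ 0 := by
    have : k ≠ 0 := by omega
    exact_mod_cast this
  have hne : Nonempty S := by
    by_contra hS
    rw [not_nonempty_iff] at hS
    exact hv (Subsingleton.elim _ _)
  obtain ⟨x, hx⟩ := Finite.exists_max (fun q => ‖v q‖)
  have hvx : v x ≠ 0 := by
    intro h0
    apply hv
    funext q
    have := hx q
    simp only [h0, norm_zero] at this
    simpa using this
  have step : ∀ y, ‖v y‖ = ‖v x‖ → v (δ y 0) = l * v y := by
    intro y hy
    refine eq_of_avg k hk (fun d => v (δ y d)) (l * v y) ?_ ?_ 0 (by omega)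
    · intro d _
      rw [norm_mul, hl, one_mul, hy]
      exact hx _
    · have := congrFun hvl y
      rw [avgOp_apply, inv_mul_eq_iff_eq_mul₀ hk0] at this
      simpa using this
  let o : ℕ → S := fun i => (fun y => δ y 0)^[i] x
  have ho : ∀ i, v (o i) = l ^ i * v x := by
    intro i
    induction i with
    | zero => simp [o]
    | succ i ih =>
      have : o (i + 1) = δ (o i) 0 := by simp only [o, Function.iterate_succ_apply']
      rw [this, step, ih]
      · ring
      · rw [ih]; simp [hl]
  have hl0 : l ≠ 0 := by
    intro h; simp [h] at hl
  obtain ⟨i, j, hij, hoij⟩ := Fintype.exists_ne_map_eq_of_card_lt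
    (fun i : Fin (Fintype.card S + 1) => o i) (by simp)
  wlog hlt : i < j generalizing i j
  · exact this j i hij.symm hoij.symm (lt_of_le_of_ne (not_lt.mp hlt) hij.symm)
  have h1 : l ^ (i : ℕ) = l ^ (j : ℕ) := by
    have := ho i
    have h2 : o i = o j := hoij
    rw [h2, ho j] at this
    exact (mul_right_cancel₀ hvx this).symm
  have hlt' : (i : ℕ) < j := hlt
  have h2 : l ^ ((j : ℕ) - i) = 1 := by
    have h3 : l ^ (j : ℕ) = l ^ (i : ℕ) * l ^ ((j : ℕ) - i) := by
      rw [← pow_add]; congr 1; omega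
    rw [← h1] at h3
    exact (mul_left_cancel₀ (pow_ne_zero _ hl0) (by rw [mul_one]; exact h3)).symm
  have hd : ((j : ℕ) - i) ∣ (Fintype.card S).factorial :=
    Nat.dvd_factorial (by omega) (by have := j.2; omega)
  obtain ⟨e, he⟩ := hd
  rw [he, pow_mul, h2, one_pow]

lemma decay_of_spectrum {W : Type} [NormedAddCommGroup W] [NormedSpace ℂ W]
    [FiniteDimensional ℂ W] (T : W →ₗ[ℂ] W)
    (hT : ∀ (l : ℂ) (w : W), w ≠ 0 → T w = l • w → ‖l‖ < 1) :
    ∃ (r C : ℝ), 0 < r ∧ r < 1 ∧ 0 < C ∧ ∀ (n : ℕ) (w : W), ‖(T ^ n) w‖ ≤ C * r ^ n * ‖w‖ := by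
  rcases subsingleton_or_nontrivial W with hW | hW
  · refine ⟨1/2, 1, by norm_num, by norm_num, by norm_num, fun n w => ?_⟩
    rw [Subsingleton.elim ((T ^ n) w) 0]
    simp only [norm_zero]
    positivity
  haveI : CompleteSpace W := FiniteDimensional.complete ℂ W
  let T' : W →L[ℂ] W := LinearMap.toContinuousLinearMap T
  have hpow : ∀ n w, (T' ^ n) w = (T ^ n) w := by
    intro n
    induction n with
    | zero => simp
    | succ n ih => intro w; rw [pow_succ, pow_succ]; exact ih (T w)
  have hsp : ∀ l ∈ spectrum ℂ T', ‖l‖₊ < 1 := by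
    intro l hl
    have hl' : l ∈ spectrum ℂ T := by
      have e := AlgEquiv.spectrum_eq (Module.End.toContinuousLinearMap W (𝕜 := ℂ)) T
      rw [← e]; exact hl
    rw [← Module.End.hasEigenvalue_iff_mem_spectrum] at hl'
    obtain ⟨w, hw⟩ := hl'.exists_hasEigenvector
    exact hT l w hw.2 hw.apply_eq_smul
  have hrad : spectralRadius ℂ T' < (1 : NNReal) :=
    spectrum.spectralRadius_lt_of_forall_lt T' hsp
  obtain ⟨r, hr1, hr2⟩ := ENNReal.lt_iff_exists_nnreal_btwn.mp hrad
  have hr2' : r < 1 := by exact_mod_cast hr2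
  have hr0 : 0 < r := by
    have : (0 : ENNReal) < r := lt_of_le_of_lt zero_le hr1
    exact_mod_cast this
  have hlim := spectrum.pow_nnnorm_pow_one_div_tendsto_nhds_spectralRadius T'
  have hev := (hlim.eventually_lt_const hr1).and (eventually_ge_atTop 1)
  obtain ⟨N, hN⟩ := eventually_atTop.mp hev
  have hbig : ∀ n ≥ N, ‖T' ^ n‖ ≤ (r : ℝ) ^ n := by
    intro n hn
    obtain ⟨h1, h2⟩ := hN n hn
    have hn0 : (0 : ℝ) < n := by exact_mod_cast h2
    have h3 : ((‖T' ^ n‖₊ : ENNReal)) ≤ (r : ENNReal) ^ n := by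
      have := ENNReal.rpow_le_rpow h1.le hn0.le
      rw [← ENNReal.rpow_mul, one_div, inv_mul_cancel₀ hn0.ne', ENNReal.rpow_one,
        ENNReal.rpow_natCast] at this
      exact this
    exact_mod_cast h3
  have hr0' : (0 : ℝ) < r := hr0
  refine ⟨r, 1 + ∑ i ∈ Finset.range N, ‖T' ^ i‖ / (r : ℝ) ^ i, hr0', hr2', by positivity, ?_⟩
  intro n w
  rw [← hpow]
  refine ((T' ^ n).le_opNorm w).trans ?_
  gcongr
  rcases lt_or_ge n N with hn | hn
  · have h1 : ‖T' ^ n‖ / (r : ℝ) ^ n ≤ ∑ i ∈ Finset.range N, ‖T' ^ i‖ / (r : ℝ) ^ i :=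
      Finset.single_le_sum (f := fun i => ‖T' ^ i‖ / (r : ℝ) ^ i)
        (fun i _ => by positivity) (Finset.mem_range.mpr hn)
    rw [div_le_iff₀ (by positivity)] at h1
    have : (0 : ℝ) ≤ (r : ℝ) ^ n := by positivity
    linarith
  · refine (hbig n hn).trans ?_
    have : (0 : ℝ) ≤ ∑ i ∈ Finset.range N, ‖T' ^ i‖ / (r : ℝ) ^ i :=
      Finset.sum_nonneg fun i _ => by positivity
    exact le_mul_of_one_le_left (by positivity) (by linarith)

lemma avg_decay (k : ℕ) (hk : 2 ≤ k) (δ : S → ℕ → S) (a : ℕ)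
    (ha : a = (Fintype.card S).factorial) (u : S → ℂ) :
    ∃ (r C : ℝ), 0 < r ∧ r < 1 ∧ 0 < C ∧
      ∀ n : ℕ, ‖(avgOp ℂ k δ ^ n) ((avgOp ℂ k δ ^ a) u - u)‖ ≤ C * r ^ n := by
  set P := avgOp ℂ k δ with hP
  let W : Submodule ℂ (S → ℂ) := LinearMap.range (P ^ a - 1)
  have hWP : ∀ w ∈ W, P w ∈ W := by
    rintro w ⟨v, rfl⟩
    refine ⟨P v, ?_⟩
    have hc : (P ^ a - 1) * P = P * (P ^ a - 1) := by
      rw [sub_mul, mul_sub, ← pow_succ, ← pow_succ', one_mul, mul_one]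
    exact congrArg (fun L : Module.End ℂ (S → ℂ) => L v) hc
  let T : W →ₗ[ℂ] W := P.restrict hWP
  have hT : ∀ (n : ℕ) (w : W), (((T ^ n) w : W) : S → ℂ) = (P ^ n) (w : S → ℂ) := by
    intro n
    induction n with
    | zero => simp
    | succ n ih =>
      intro w
      rw [pow_succ, pow_succ, Module.End.mul_apply, Module.End.mul_apply, ih]
      rfl
  obtain ⟨r, C, hr0, hr1, hC, hb⟩ := decay_of_spectrum T (by
    intro l w hw hl
    have hw0 : (w : S → ℂ) ≠ 0 := fun h => hw (Subtype.ext h)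
    have hl' : P (w : S → ℂ) = l • (w : S → ℂ) := congrArg Subtype.val hl
    have hle : ‖l‖ ≤ 1 := by
      have h1 := norm_avg_le k hk δ (w : S → ℂ)
      rw [← hP, hl', norm_smul] at h1
      have h2 : 0 < ‖(w : S → ℂ)‖ := norm_pos_iff.mpr hw0
      nlinarith
    refine lt_of_le_of_ne hle fun h1 => hw0 ?_
    have hroot := eigen_root k hk δ _ hw0 l h1 hl'
    rw [← ha] at hroot
    have hpow : ∀ n : ℕ, (P ^ n) (w : S → ℂ) = l ^ n • (w : S → ℂ) := by
      intro n
      induction n with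
      | zero => simp
      | succ n ih => rw [pow_succ, Module.End.mul_apply, hl', map_smul, ih, smul_smul, pow_succ']
    obtain ⟨v, hv⟩ := w.2
    exact disjoint_ker_range k hk δ a v _ (by simpa using hv) (by rw [← hP, hpow, hroot, one_smul]))
  let w : W := ⟨(P ^ a) u - u, u, by simp⟩
  refine ⟨r, C * ‖w‖ + C, hr0, hr1, by positivity, fun n => ?_⟩
  have h1 := hb n w
  have h2 : ‖(T ^ n) w‖ = ‖(P ^ n) ((P ^ a) u - u)‖ := by
    rw [← hT n w]; rfl
  rw [← h2]
  have : 0 < C * r ^ n := by positivity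
  nlinarith

lemma rat_decomp (k : ℕ) (hk : 2 ≤ k) (δ : S → ℕ → S) (a : ℕ) (f : S → ℚ) :
    ∃ g u : S → ℚ, (avgOp ℚ k δ ^ a) g = g ∧ f = g + ((avgOp ℚ k δ ^ a) u - u) := by
  set L : (S → ℚ) →ₗ[ℚ] (S → ℚ) := avgOp ℚ k δ ^ a - 1 with hL
  have hdis : Disjoint (LinearMap.ker L) (LinearMap.range L) := by
    rw [Submodule.disjoint_def]
    rintro w hw ⟨v, hv⟩
    apply castFun_eq_zero
    apply disjoint_ker_range k hk δ a (castFun v)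
    · rw [← castFun_avg_pow, ← castFun_sub, ← hv]; rfl
    · rw [← castFun_avg_pow]
      have : (avgOp ℚ k δ ^ a) w - w = 0 := hw
      rw [sub_eq_zero.mp this]
  have hdim := LinearMap.finrank_range_add_finrank_ker L
  have hc := Submodule.eq_top_of_disjoint (LinearMap.ker L) (LinearMap.range L)
    (by omega) hdis
  have hf : f ∈ LinearMap.ker L ⊔ LinearMap.range L := by rw [hc]; trivial
  obtain ⟨g, hg, y, ⟨u, rfl⟩, hfy⟩ := Submodule.mem_sup.mp hf
  refine ⟨g, u, ?_, hfy.symm⟩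
  have : (avgOp ℚ k δ ^ a) g - g = 0 := hg
  exact sub_eq_zero.mp this

end

theorem partial_sums_automatic_asymptotics
    (k : ℕ) (hk : 2 ≤ k) (h : ℕ → ℚ) (hauto : IsAutomaticSeq k h)
    (hnn : ∀ n, 0 ≤ h n)
    (s : ℕ → ℚ) (hs : ∀ n, s n = ∑ j ∈ Finset.range n, h j) :
    ∃ (β C : ℝ) (a : ℕ) (c : ℕ → ℚ),
      0 < β ∧ β < (k : ℝ) ∧ 0 < C ∧ 1 ≤ a ∧
      ∀ n : ℕ, ∀ j < a,
        |(s (k ^ (a * n + j)) : ℝ) - (c j : ℝ) * (k : ℝ) ^ (a * n + j)| < C * β ^ (a * n) := by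
  obtain ⟨Q, hQ, q₀, δ, τ, hτ⟩ := hauto
  let δ' : Option Q → ℕ → Option Q := fun q d =>
    match q with
    | none => if d = 0 then none else some (δ q₀ d)
    | some q => some (δ q d)
  let f : Option Q → ℚ := fun q => τ (q.getD q₀)
  let run : ℕ → Option Q := fun n =>
    if n = 0 then none else some (((Nat.digits k n).reverse).foldl δ q₀)
  have hrun : ∀ n, ∀ d < k, run (k * n + d) = δ' (run n) d := by
    intro n d hd
    by_cases hn : n = 0
    · subst hn
      by_cases hd0 : d = 0
      · subst hd0; simp [run, δ']
      · simp [run, δ', hd0, Nat.digits_of_lt k d hd0 hd]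
    · have h1 : k * n + d ≠ 0 := by
        have : 0 < k * n := by positivity
        omega
      have h2 : Nat.digits k (k * n + d) = d :: Nat.digits k n := by
        rw [add_comm]
        exact Nat.digits_add k (by omega) d n hd (Or.inr hn)
      simp only [run, δ', if_neg h1, if_neg hn, h2, List.reverse_cons, List.foldl_append,
        List.foldl_cons, List.foldl_nil]
  have hf : ∀ n, h n = f (run n) := by
    intro n
    rw [hτ n]
    by_cases hn : n = 0
    · subst hn; simp [f, run]
    · simp [f, run, hn]
  have hsum : ∀ m, s (k ^ m) = (k : ℚ) ^ m * (avgOp ℚ k δ' ^ m) f (run 0) := by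
    intro m
    rw [hs, ← sum_run k hk δ' run hrun m f]
    exact Finset.sum_congr rfl fun n _ => hf n
  obtain ⟨a, ha⟩ : ∃ a, a = (Fintype.card (Option Q)).factorial := ⟨_, rfl⟩
  have ha1 : 1 ≤ a := by rw [ha]; exact Nat.factorial_pos _
  obtain ⟨g, u, hg, hfu⟩ := rat_decomp k hk δ' a f
  obtain ⟨r, C, hr0, hr1, hC, hb⟩ := avg_decay k hk δ' a ha (castFun u)
  have hk0 : (0 : ℝ) < k := by
    have : 0 < k := by omega
    exact_mod_cast this
  have hk1 : (1 : ℝ) ≤ k := by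
    have : 1 ≤ k := by omega
    exact_mod_cast this
  refine ⟨k * r, C * (k : ℝ) ^ a + 1, a, fun j => (avgOp ℚ k δ' ^ j) g (run 0), by positivity,
    by nlinarith, by positivity, ha1, ?_⟩
  intro n j hj
  have hgn : ∀ n : ℕ, (avgOp ℚ k δ' ^ (a * n)) g = g := by
    intro n
    induction n with
    | zero => simp
    | succ n ih => rw [Nat.mul_succ, pow_add, Module.End.mul_apply, hg, ih]
  obtain ⟨m, hm⟩ : ∃ m, m = a * n + j := ⟨_, rfl⟩
  obtain ⟨w, hw⟩ : ∃ w, w = (avgOp ℚ k δ' ^ a) u - u := ⟨_, rfl⟩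
  rw [← hm]
  have e1 : (avgOp ℚ k δ' ^ m) f = (avgOp ℚ k δ' ^ j) g + (avgOp ℚ k δ' ^ m) w := by
    rw [hfu, map_add, ← hw]
    congr 1
    rw [hm, add_comm, pow_add, Module.End.mul_apply, hgn]
  have e2 : |(((avgOp ℚ k δ' ^ m) w (run 0) : ℚ) : ℝ)| ≤ C * r ^ m := by
    have h1 := hb m
    rw [← castFun_avg_pow, ← castFun_sub, ← hw, ← castFun_avg_pow] at h1
    have h2 := (norm_le_pi_norm (castFun ((avgOp ℚ k δ' ^ m) w)) (run 0)).trans h1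
    have h3 : ‖castFun ((avgOp ℚ k δ' ^ m) w) (run 0)‖
        = |(((avgOp ℚ k δ' ^ m) w (run 0) : ℚ) : ℝ)| := by
      simp only [castFun]
      rw [← Complex.ofReal_ratCast, Complex.norm_real, Real.norm_eq_abs]
    rwa [h3] at h2
  have e3 : (s (k ^ m) : ℝ) - (((avgOp ℚ k δ' ^ j) g (run 0) : ℚ) : ℝ) * (k : ℝ) ^ m
      = (k : ℝ) ^ m * (((avgOp ℚ k δ' ^ m) w (run 0) : ℚ) : ℝ) := by
    rw [hsum m, e1, Pi.add_apply]
    push_cast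
    ring
  show |(s (k ^ m) : ℝ) - (((avgOp ℚ k δ' ^ j) g (run 0) : ℚ) : ℝ) * (k : ℝ) ^ m| < _
  rw [e3, abs_mul, abs_of_pos (pow_pos hk0 m)]
  have hpos : 0 < ((k : ℝ) * r) ^ (a * n) := by positivity
  have e4 : ((k : ℝ) * r) ^ j ≤ (k : ℝ) ^ a := by
    calc ((k : ℝ) * r) ^ j ≤ (k : ℝ) ^ j := by
          apply pow_le_pow_left₀ (by positivity); nlinarith
      _ ≤ (k : ℝ) ^ a := pow_le_pow_right₀ hk1 hj.le
  calc (k : ℝ) ^ m * |(((avgOp ℚ k δ' ^ m) w (run 0) : ℚ) : ℝ)| ≤ (k : ℝ) ^ m * (C * r ^ m) := by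
        gcongr
    _ = C * ((k : ℝ) * r) ^ j * ((k : ℝ) * r) ^ (a * n) := by
        rw [mul_assoc C, ← pow_add, add_comm j, ← hm, mul_pow]; ring
    _ ≤ C * (k : ℝ) ^ a * ((k : ℝ) * r) ^ (a * n) := by gcongr
    _ < (C * (k : ℝ) ^ a + 1) * ((k : ℝ) * r) ^ (a * n) := by linarith
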